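/- For every nonzero rational integer n ∈ ℤ with gcd(n, 3) = 1, the fraction (3λ³)/(nλ⁴) is in reduced form; that is, the reduced factor of 3/(nλ) equals 3 and 3λ³ = 3(2λ+1). -/

import Mathlib

/-!
Being in reduced form depends only on the `G₅`-orbit of the column `(x, y)ᵗ`, so it is preserved by
`(x, y) ↦ (-y, x)` and, for `k ∈ ℤ`, by `(x, y) ↦ (x + kλy, y)`; hence also by
`(x, y) ↦ (-x, -y)` and `(x, y) ↦ (x, y + kλx)`.

Write `n = 3m + r` with `r = ±1`. The last move with `k = m` sends `(3λ³, rλ⁴)` to `(3λ³, nλ⁴)`,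
so only `(3λ³, ±λ⁴)` remain. With `e = -r`, and because `3λ² - 1 = λ⁴` and `λ + λ⁵ = 3λ³`, they are
reached up to sign by
`(1, 0) → (0, 1) → (eλ, 1) → (-1, eλ) → (λ⁴, eλ) → (-eλ, λ⁴) → (-3eλ³, λ⁴)`.
-/

open Matrix

noncomputable section

/-- `λ = 2 cos(π/5) = (1+√5)/2`. -/
def lam : ℝ := 2 * Real.cos (Real.pi / 5)

/-- The ring `ℤ[λ]`, as a subring of `ℝ`. -/
def Zlam : Subring ℝ := Subring.closure {lam}

/-- `λ` as an element of `ℤ[λ]`. -/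
def lamZ : Zlam := ⟨lam, Subring.subset_closure rfl⟩

/-- `SL(2,ℝ)`. -/
abbrev SL2R := Matrix.SpecialLinearGroup (Fin 2) ℝ

/-- `PSL(2,ℝ)`, realized as `SL(2,ℝ)` modulo its center `{±1}`. -/
abbrev PSL2R := SL2R ⧸ Subgroup.center SL2R

/-- The canonical projection `SL(2,ℝ) → PSL(2,ℝ)`. -/
def toPSL : SL2R →* PSL2R := QuotientGroup.mk' (Subgroup.center SL2R)

/-- The generator `[[1, λ], [0, 1]]` of the Hecke group `G₅`. -/
def Tgen : SL2R := ⟨!![1, lam; 0, 1], by simp [Matrix.det_fin_two_of]⟩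

/-- The generator `[[0, -1], [1, 0]]` of the Hecke group `G₅`. -/
def Sgen : SL2R := ⟨!![0, -1; 1, 0], by simp [Matrix.det_fin_two_of]⟩

/-- The Hecke group `G₅ ≤ PSL(2,ℝ)`, generated by the images of
`[[1, λ], [0, 1]]` and `[[0, -1], [1, 0]]`. -/
def G5 : Subgroup PSL2R := Subgroup.closure {toPSL Tgen, toPSL Sgen}

/-- The subgroup of `SL(2,ℝ)` of matrices with entries in `ℤ[λ]` whose `(2,1)` entry is
divisible by `τ`. -/
def SL0 (τ : ℝ) : Subgroup SL2R where
  carrier := { A | (∀ i j, A.1 i j ∈ Zlam) ∧ ∃ k ∈ Zlam, A.1 1 0 = τ * k }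
  one_mem' := by
    refine ⟨fun i j => ?_, 0, Zlam.zero_mem, by simp⟩
    rcases Decidable.eq_or_ne i j with h | h <;>
      simp [Matrix.one_apply, h, Zlam.one_mem, Zlam.zero_mem]
  mul_mem' := by
    rintro A B ⟨hA, kA, hkA, hA10⟩ ⟨hB, kB, hkB, hB10⟩
    constructor
    · intro i j
      have : (A * B).1 i j = A.1 i 0 * B.1 0 j + A.1 i 1 * B.1 1 j := by
        simp [Matrix.mul_apply, Fin.sum_univ_two]
      rw [this]
      exact Zlam.add_mem (Zlam.mul_mem (hA i 0) (hB 0 j)) (Zlam.mul_mem (hA i 1) (hB 1 j))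
    · refine ⟨kA * B.1 0 0 + A.1 1 1 * kB,
        Zlam.add_mem (Zlam.mul_mem hkA (hB 0 0)) (Zlam.mul_mem (hA 1 1) hkB), ?_⟩
      have : (A * B).1 1 0 = A.1 1 0 * B.1 0 0 + A.1 1 1 * B.1 1 0 := by
        simp [Matrix.mul_apply, Fin.sum_univ_two]
      rw [this, hA10, hB10]; ring
  inv_mem' := by
    rintro A ⟨hA, kA, hkA, hA10⟩
    rw [Matrix.SpecialLinearGroup.SL2_inv_expl A]
    constructor
    · intro i j
      fin_cases i <;> fin_cases j <;>
        simp [Zlam.neg_mem, hA 0 0, hA 0 1, hA 1 0, hA 1 1]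
    · exact ⟨-kA, Zlam.neg_mem hkA, by simp [hA10]⟩

/-- The congruence subgroup `G₀(τ) ≤ G₅`: elements of `G₅` represented by a matrix with
entries in `ℤ[λ]` whose `(2,1)` entry is divisible by `τ`. -/
def G0 (τ : ℝ) : Subgroup PSL2R := G5 ⊓ (SL0 τ).map toPSL

/-- The principal congruence subgroup `G(ν)` of `G₅` (as a set): elements of `G₅`
represented by a matrix with entries in `ℤ[λ]` that is congruent to `±I` modulo `ν`. -/
def Gp (ν : ℝ) : Set PSL2R :=
  { g | g ∈ G5 ∧ ∃ A : SL2R, toPSL A = g ∧ (∀ i j, A.1 i j ∈ Zlam) ∧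
      ((∀ i j, ∃ k ∈ Zlam, A.1 i j - (1 : Matrix (Fin 2) (Fin 2) ℝ) i j = ν * k) ∨
       (∀ i j, ∃ k ∈ Zlam, A.1 i j + (1 : Matrix (Fin 2) (Fin 2) ℝ) i j = ν * k)) }

/-- `x/y` is in reduced form: `(x, y)ᵗ` is a column of a matrix representing an element
of `G₅`. -/
def IsReducedForm (x y : ℝ) : Prop :=
  ∃ A : SL2R, toPSL A ∈ G5 ∧
    ((A.1 0 0 = x ∧ A.1 1 0 = y) ∨ (A.1 0 1 = x ∧ A.1 1 1 = y))

/-- `g` is a gcd of `a` and `b` in `ℤ[λ]` (well defined up to units). -/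
def IsGCDOf (g a b : Zlam) : Prop := g ∣ a ∧ g ∣ b ∧ ∀ d : Zlam, d ∣ a → d ∣ b → d ∣ g

/-- `gcd(a, b)` is a unit in `ℤ[λ]`. -/
def CoprimeZ (a b : Zlam) : Prop := ∀ d : Zlam, d ∣ a → d ∣ b → IsUnit d

/-- `b = [τ]`: `(b)` is the largest ideal of `ℤ[λ]` with `(b²) ⊆ (τ)`. -/
def IsRadOf (τ b : Zlam) : Prop := τ ∣ b ^ 2 ∧ ∀ s : Zlam, τ ∣ s ^ 2 → b ∣ s

/-- `r ∈ ℤ[λ]` is `G₅`-elementary: whenever `x/(r·y)` is in reduced form,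
`x² ≡ 1 (mod r)`. -/
def G5Elementary (r : Zlam) : Prop :=
  ∀ x y : Zlam, IsReducedForm (x : ℝ) ((r : ℝ) * (y : ℝ)) → r ∣ (x ^ 2 - 1)

end

theorem lam_sq : lam ^ 2 = lam + 1 := by
  have h5 : Real.sqrt 5 ^ 2 = 5 := Real.sq_sqrt (by norm_num)
  unfold lam
  rw [Real.cos_pi_div_five]
  linear_combination h5 / 4

/-- Left multiplication by an element of `G₅` preserves columns of matrices representing
elements of `G₅`. -/
theorem IsReducedForm.smul {x y : ℝ} (h : IsReducedForm x y) (B : SL2R) (hB : toPSL B ∈ G5) :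
    IsReducedForm (B.1 0 0 * x + B.1 0 1 * y) (B.1 1 0 * x + B.1 1 1 * y) := by
  obtain ⟨A, hA, hcol⟩ := h
  refine ⟨B * A, by rw [map_mul]; exact G5.mul_mem hB hA, ?_⟩
  rcases hcol with ⟨rfl, rfl⟩ | ⟨rfl, rfl⟩
  · left; simp [Matrix.mul_apply, Fin.sum_univ_two]
  · right; simp [Matrix.mul_apply, Fin.sum_univ_two]

theorem IsReducedForm.rotate {x y : ℝ} (h : IsReducedForm x y) : IsReducedForm (-y) x := by
  have := h.smul Sgen (Subgroup.subset_closure (by simp))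
  simpa [Sgen] using this

theorem IsReducedForm.neg {x y : ℝ} (h : IsReducedForm x y) : IsReducedForm (-x) (-y) :=
  h.rotate.rotate

theorem IsReducedForm.translate {x y : ℝ} (h : IsReducedForm x y) (k : ℤ) :
    IsReducedForm (x + k * lam * y) y := by
  have hT : toPSL Tgen ∈ G5 := Subgroup.subset_closure (by simp)
  induction k using Int.induction_on with
  | zero => simpa using h
  | succ i ih =>
    convert ih.smul Tgen hT using 1 <;> simp [Tgen]
    ring
  | pred i ih =>
    have := ih.smul Tgen⁻¹ (by rw [map_inv]; exact G5.inv_mem hT)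
    rw [Matrix.SpecialLinearGroup.SL2_inv_expl] at this
    convert this using 1 <;> simp [Tgen]
    ring

theorem IsReducedForm.lower {x y : ℝ} (h : IsReducedForm x y) (k : ℤ) :
    IsReducedForm x (y + k * lam * x) := by
  convert (h.rotate.translate (-k)).rotate.neg using 1 <;> push_cast <;> ring

theorem isReducedForm_one_zero : IsReducedForm 1 0 :=
  ⟨1, by rw [map_one]; exact G5.one_mem, Or.inl (by simp)⟩

theorem isReducedForm_three_base (e : ℤ) (he : e ^ 2 = 1) :
    IsReducedForm (-(e * (3 * lam ^ 3))) (lam ^ 4) := by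
  have he' : (e : ℝ) ^ 2 = 1 := by exact_mod_cast he
  have hl := lam_sq
  have h1 := ((isReducedForm_one_zero.rotate.translate e).rotate.translate (3 * e)).rotate.translate
    (-e)
  have h4 : -1 + ((3 * e : ℤ) : ℝ) * lam * (-0 + e * lam * 1) = lam ^ 4 := by
    push_cast
    linear_combination 3 * lam ^ 2 * he' + (-lam ^ 2 - lam + 1) * hl
  rw [h4] at h1
  convert h1 using 1
  push_cast
  linear_combination (e : ℝ) * (lam ^ 3 + lam ^ 2 - lam) * hl

/-- For `n ∈ ℤ` nonzero with `gcd(n, 3) = 1`, the fraction `(3λ³)/(nλ⁴)` is in reduced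
form (so the reduced factor of `3/(nλ)` is `3`), and `3λ³ = 3(2λ+1)`. -/
theorem reduced_form_three (n : ℤ) (hn : n ≠ 0) (hco : Int.gcd n 3 = 1) :
    IsReducedForm (3 * lam ^ 3) ((n : ℝ) * lam ^ 4) ∧
    3 * lam ^ 3 = 3 * (2 * lam + 1) := by
  refine ⟨?_, by linear_combination (3 * lam + 3) * lam_sq⟩
  have h3 : ¬ (3 : ℤ) ∣ n := by
    intro h
    have := Int.gcd_eq_right (by norm_num) h
    omega
  obtain ⟨m, hm | hm⟩ : ∃ m : ℤ, n = 3 * m + 1 ∨ n = 3 * m - 1 :=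
    ⟨(n + 1) / 3, by omega⟩
  · convert (isReducedForm_three_base (-1) (by norm_num)).lower m using 1 <;>
      subst hm <;> push_cast <;> ring
  · convert (isReducedForm_three_base 1 (by norm_num)).neg.lower m using 1 <;>
      subst hm <;> push_cast <;> ring
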